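/- Let α, β > −1, n ≥ 1, let u : ℝ → ℝ be differentiable, and let x_0,…,x_n be distinct points such that u(x_0),…,u(x_{n−1}) are the n distinct roots of the Jacobi polynomial G = P_n^{α,β+1}, u(x_n) = 1, u(x_0),…,u(x_n) are pairwise distinct, and u'(x_i) ≠ 0 for all i. Let L_j be the generalized Lagrange functions on these nodes and D the matrix with entries d_{kj} = L_j'(x_k). Then for every k with 0 ≤ k ≤ n−1, the entry in the last column satisfies d_{kn} = u'(x_k) · P_{n−1}^{α+1,β+2}(u(x_k)) · n! · (α+β+n+2) · Γ(α+1) / (2 Γ(α+1+n)). -/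

import Mathlib

/-- Jacobi polynomials `P_n^{α,β}` defined by the three-term recurrence. -/
noncomputable def jacobiP (α β : ℝ) : ℕ → ℝ → ℝ
  | 0, _ => 1
  | 1, x => (α + β + 2) * x / 2 + (α - β) / 2
  | K + 2, x =>
      ((2 * ((K : ℝ) + 1) + α + β + 1) * (2 * ((K : ℝ) + 1) + α + β + 2) /
            (2 * (((K : ℝ) + 1) + 1) * (((K : ℝ) + 1) + α + β + 1)) * x -
          (β ^ 2 - α ^ 2) * (2 * ((K : ℝ) + 1) + α + β + 1) /
            (2 * (((K : ℝ) + 1) + 1) * (((K : ℝ) + 1) + α + β + 1) *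
              (2 * ((K : ℝ) + 1) + α + β))) *
        jacobiP α β (K + 1) x -
      (((K : ℝ) + 1) + α) * (((K : ℝ) + 1) + β) * (2 * ((K : ℝ) + 1) + α + β + 2) /
            ((((K : ℝ) + 1) + 1) * (((K : ℝ) + 1) + α + β + 1) * (2 * ((K : ℝ) + 1) + α + β)) *
        jacobiP α β K x

open Finset

/-- `glW u x t = ∏ i, (u t − u (x i))`. -/
noncomputable def glW (u : ℝ → ℝ) {n : ℕ} (x : Fin (n + 1) → ℝ) : ℝ → ℝ :=
  fun t => ∏ i, (u t - u (x i))

/-- Generalized Lagrange function `L_j(t) = κ_j ∏_{i ≠ j} (u t − u (x i))`,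
with `κ_j = u'(x_j) / w'(x_j)`. -/
noncomputable def glL (u : ℝ → ℝ) {n : ℕ} (x : Fin (n + 1) → ℝ) (j : Fin (n + 1)) : ℝ → ℝ :=
  fun t => (deriv u (x j) / deriv (glW u x) (x j)) *
    ∏ i ∈ Finset.univ.erase j, (u t - u (x i))

open Polynomial

/-!
By the choice of `κ_j`, the function `L_n` is `ℓ_n ∘ u`, where `ℓ_n` is the ordinary Lagrange basis
polynomial on the nodes `u (x i)`. The Jacobi polynomial `G = P_n^{α,β+1}` has degree at most `n`
and vanishes at all these nodes but the last one, which is `1`, so `G = G(1) ℓ_n` and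
`L_n' = u' · (G' ∘ u) / G(1)`. The values `G' = (n + α + β + 2) / 2 · P_{n-1}^{α+1,β+2}` and
`G(1) = Γ(α + 1 + n) / (n! Γ(α + 1))` are read off the hypergeometric expansion of `G` in powers of
`(1 - x) / 2`, which satisfies the three-term recurrence coefficient by coefficient.
-/

section HypergeometricCoefficient

lemma ascPochhammer_eval_succ_left {R : Type*} [CommSemiring R] (a : R) (k : ℕ) :
    (ascPochhammer R (k + 1)).eval a = a * (ascPochhammer R k).eval (a + 1) := by
  simp [ascPochhammer_succ_left, eval_comp]

variable {𝕂 : Type*} [Field 𝕂] (a b c : 𝕂) (k : ℕ)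

lemma ordinaryHypergeometricCoefficient_comm :
    ordinaryHypergeometricCoefficient a b c k = ordinaryHypergeometricCoefficient b a c k := by
  simp only [ordinaryHypergeometricCoefficient]; ring

variable [CharZero 𝕂] {c} {k}

lemma ordinaryHypergeometricCoefficient_succ (hc : c + k ≠ 0) :
    (k + 1) * (c + k) * ordinaryHypergeometricCoefficient a b c (k + 1) =
      (a + k) * (b + k) * ordinaryHypergeometricCoefficient a b c k := by
  have hk : (k + 1 : 𝕂) ≠ 0 := k.cast_add_one_ne_zero
  simp only [ordinaryHypergeometricCoefficient, Nat.factorial_succ, Nat.cast_mul, Nat.cast_succ,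
    ascPochhammer_succ_eval, mul_inv]
  field_simp

lemma ordinaryHypergeometricCoefficient_succ_contiguous (hc : c + k ≠ 0) :
    (k + 1) * (c + k) * (b * ordinaryHypergeometricCoefficient a (b + 1) c (k + 1)) =
      a * (b + k) * (b + k + 1) * ordinaryHypergeometricCoefficient (a + 1) b c k := by
  have hk : (k + 1 : 𝕂) ≠ 0 := k.cast_add_one_ne_zero
  have hb : b * (ascPochhammer 𝕂 k).eval (b + 1) = (ascPochhammer 𝕂 k).eval b * (b + k) := by
    rw [← ascPochhammer_eval_succ_left, ascPochhammer_succ_eval]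
  simp only [ordinaryHypergeometricCoefficient, Nat.factorial_succ, Nat.cast_mul, Nat.cast_succ,
    ascPochhammer_eval_succ_left a, ascPochhammer_succ_eval k c,
    ascPochhammer_succ_eval k (b + 1), mul_inv]
  field_simp
  linear_combination a * (ascPochhammer 𝕂 k).eval (a + 1) * (b + k + 1) * hb /
    (k.factorial * (ascPochhammer 𝕂 k).eval c)

variable (k)

lemma ordinaryHypergeometricCoefficient_succ_shift (hc : c ≠ 0) :
    c * (ordinaryHypergeometricCoefficient a b c (k + 1) * (k + 1)) =
      a * b * ordinaryHypergeometricCoefficient (a + 1) (b + 1) (c + 1) k := by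
  have hk : (k + 1 : 𝕂) ≠ 0 := k.cast_add_one_ne_zero
  simp only [ordinaryHypergeometricCoefficient, Nat.factorial_succ, Nat.cast_mul, Nat.cast_succ,
    ascPochhammer_eval_succ_left, mul_inv]
  field_simp

end HypergeometricCoefficient

lemma Gamma_add_natCast_eq_ascPochhammer_mul {s : ℝ} (hs : ∀ k : ℕ, s ≠ -k) (n : ℕ) :
    Real.Gamma (s + n) = (ascPochhammer ℝ n).eval s * Real.Gamma s := by
  induction n with
  | zero => simp
  | succ n ih =>
    have hsn : s + n ≠ 0 := mt add_eq_zero_iff_eq_neg.1 (hs n)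
    rw [Nat.cast_succ, ← add_assoc, Real.Gamma_add_one hsn, ih, ascPochhammer_succ_eval]
    ring

lemma Gamma_add_natCast_ne_zero {s : ℝ} (hs : ∀ k : ℕ, s ≠ -k) (n : ℕ) :
    Real.Gamma (s + n) ≠ 0 :=
  Real.Gamma_ne_zero fun k h => hs (k + n) (by push_cast; linarith)

section JacobiPolynomial

/-- The coefficient of `((1 - x) / 2) ^ k` in the hypergeometric expansion
`(a + 1)ₙ / n! * ₂F₁(-n, n + a + b + 1; a + 1; (1 - x) / 2)` of the Jacobi polynomial. -/
noncomputable def jacobiCoeff (a b : ℝ) (n k : ℕ) : ℝ :=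
  (ascPochhammer ℝ n).eval (a + 1) / n.factorial *
    ordinaryHypergeometricCoefficient (-n : ℝ) (n + a + b + 1) (a + 1) k

/-- The Jacobi polynomial as a polynomial in the variable `(1 - x) / 2`, in which its
coefficients are hypergeometric. -/
noncomputable def jacobiHypergeometric (a b : ℝ) (n : ℕ) : ℝ[X] :=
  ∑ k ∈ range (n + 1), monomial k (jacobiCoeff a b n k)

/-- The Jacobi polynomial as an element of `ℝ[X]`, obtained from its hypergeometric form;
`eval_jacobiPoly_eq_jacobiP` identifies its values with those of `jacobiP`. -/
noncomputable def jacobiPoly (a b : ℝ) (n : ℕ) : ℝ[X] :=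
  (jacobiHypergeometric a b n).comp (C (1 / 2) * (1 - X))

variable {a b : ℝ}

variable (a b) in
lemma jacobiCoeff_eq_zero_of_lt {n k : ℕ} (h : n < k) : jacobiCoeff a b n k = 0 := by
  simp [jacobiCoeff, ascPochhammer_eval_neg_coe_nat_of_lt h]

variable (a b) in
lemma jacobiCoeff_zero_right (n : ℕ) :
    jacobiCoeff a b n 0 = (ascPochhammer ℝ n).eval (a + 1) / n.factorial := by
  simp [jacobiCoeff, ordinaryHypergeometricCoefficient]

variable (a) in
lemma ascPochhammer_eval_div_factorial_succ (n : ℕ) :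
    (n + 1) * ((ascPochhammer ℝ (n + 1)).eval (a + 1) / (n + 1).factorial) =
      (n + 1 + a) * ((ascPochhammer ℝ n).eval (a + 1) / n.factorial) := by
  rw [ascPochhammer_succ_eval, Nat.factorial_succ]
  push_cast
  field_simp
  ring

lemma jacobiCoeff_succ_succ_mul (ha : a + 1 ≠ 0) (n k : ℕ) :
    jacobiCoeff a b (n + 1) (k + 1) * (k + 1) =
      -(n + a + b + 2) * jacobiCoeff (a + 1) (b + 1) n k := by
  have h := ordinaryHypergeometricCoefficient_succ_shift (-((n + 1 : ℕ) : ℝ))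
    ((n + 1 : ℕ) + a + b + 1) k ha
  simp only [jacobiCoeff, ascPochhammer_eval_succ_left, Nat.factorial_succ]
  push_cast at h ⊢
  rw [show (-(n + 1) + 1 : ℝ) = -n by ring,
    show (n + 1 + a + b + 1 + 1 : ℝ) = n + (a + 1) + (b + 1) + 1 by ring] at h
  generalize ordinaryHypergeometricCoefficient _ _ (a + 1) _ = F at h ⊢
  generalize ordinaryHypergeometricCoefficient _ _ (a + 1 + 1) _ = F' at h ⊢
  field_simp
  linear_combination (ascPochhammer ℝ n).eval (a + 1 + 1) * h

lemma jacobiCoeff_recurrence_zero (n : ℕ) :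
    2 * (n + 2) * (n + a + b + 2) * (2 * n + a + b + 2) * jacobiCoeff a b (n + 2) 0 =
      (2 * n + a + b + 3) * ((2 * n + a + b + 2) * (2 * n + a + b + 4) + a ^ 2 - b ^ 2) *
          jacobiCoeff a b (n + 1) 0 -
        2 * (n + 1 + a) * (n + 1 + b) * (2 * n + a + b + 4) * jacobiCoeff a b n 0 := by
  have h₁ := ascPochhammer_eval_div_factorial_succ a n
  have h₂ := ascPochhammer_eval_div_factorial_succ a (n + 1)
  push_cast at h₂
  simp only [jacobiCoeff_zero_right]
  linear_combination 2 * (n + a + b + 2) * (2 * n + a + b + 2) * h₂ -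
    2 * (n + 1 + b) * (2 * n + a + b + 4) * h₁

lemma jacobiCoeff_recurrence_succ {k : ℕ} (hc : a + 1 + k ≠ 0) (n : ℕ) :
    2 * (n + 2) * (n + a + b + 2) * (2 * n + a + b + 2) * jacobiCoeff a b (n + 2) (k + 1) =
      (2 * n + a + b + 3) * ((2 * n + a + b + 2) * (2 * n + a + b + 4) + a ^ 2 - b ^ 2) *
          jacobiCoeff a b (n + 1) (k + 1) -
        2 * (2 * n + a + b + 2) * (2 * n + a + b + 3) * (2 * n + a + b + 4) *
          jacobiCoeff a b (n + 1) k -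
        2 * (n + 1 + a) * (n + 1 + b) * (2 * n + a + b + 4) * jacobiCoeff a b n (k + 1) := by
  have h₁ := ordinaryHypergeometricCoefficient_succ (-(n + 1) : ℝ) (n + a + b + 2) hc
  have h₂ := ordinaryHypergeometricCoefficient_succ_contiguous (-(n + 2) : ℝ) (n + a + b + 2) hc
  have h₀ := ordinaryHypergeometricCoefficient_succ_contiguous (n + a + b + 1) (-(n + 1) : ℝ) hc
  rw [ordinaryHypergeometricCoefficient_comm _ (-(n + 1 : ℝ)),
    ordinaryHypergeometricCoefficient_comm _ (-(n + 1 : ℝ) + 1)] at h₀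
  have p₁ := ascPochhammer_eval_div_factorial_succ a n
  have p₂ := ascPochhammer_eval_div_factorial_succ a (n + 1)
  push_cast at p₂
  simp only [jacobiCoeff]
  push_cast
  rw [show (n + a + b + 1 + 1 : ℝ) = n + a + b + 2 by ring,
    show (-(n + 1) + 1 : ℝ) = -n by ring] at h₀
  rw [show (n + a + b + 2 + 1 : ℝ) = n + 2 + a + b + 1 by ring,
    show (-(n + 2) + 1 : ℝ) = -(n + 1) by ring] at h₂
  rw [show (n + 1 + a + b + 1 : ℝ) = n + a + b + 2 by ring]
  -- Times `(k + 1) * (a + 1 + k)`, each coefficient of index `k + 1` becomes a multiple of `F`.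
  refine mul_left_cancel₀ (mul_ne_zero k.cast_add_one_ne_zero hc) ?_
  set F := ordinaryHypergeometricCoefficient (-(n + 1) : ℝ) _ _ k
  set F₀ := ordinaryHypergeometricCoefficient (-n : ℝ) _ _ (k + 1)
  set P₁ := (ascPochhammer ℝ (n + 1)).eval (a + 1) / (n + 1).factorial
  linear_combination
    2 * (2 * n + a + b + 2) * (n + 2 + a) * P₁ * h₂ -
      (2 * n + a + b + 3) * ((2 * n + a + b + 2) * (2 * n + a + b + 4) + a ^ 2 - b ^ 2) * P₁ * h₁ -
      2 * (n + 1 + b) * (2 * n + a + b + 4) * P₁ * h₀ +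
      2 * (k + 1) * (a + 1 + k) * (2 * n + a + b + 2) * (n + a + b + 2) *
        ordinaryHypergeometricCoefficient (-(n + 2) : ℝ) (n + 2 + a + b + 1) (a + 1) (k + 1) * p₂ -
      2 * (k + 1) * (a + 1 + k) * (n + 1 + b) * (2 * n + a + b + 4) * F₀ * p₁

variable (a b) in
lemma coeff_jacobiHypergeometric (n k : ℕ) :
    (jacobiHypergeometric a b n).coeff k = jacobiCoeff a b n k := by
  simp only [jacobiHypergeometric, finsetSum_coeff, coeff_monomial, sum_ite_eq', mem_range]
  split_ifs with h
  · rfl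
  · exact (jacobiCoeff_eq_zero_of_lt a b (by omega)).symm

lemma jacobiHypergeometric_recurrence (ha : ∀ k : ℕ, a + 1 ≠ -k) (n : ℕ) :
    C (2 * (n + 2) * (n + a + b + 2) * (2 * n + a + b + 2)) * jacobiHypergeometric a b (n + 2) =
      C ((2 * n + a + b + 3) * ((2 * n + a + b + 2) * (2 * n + a + b + 4) + a ^ 2 - b ^ 2)) *
          jacobiHypergeometric a b (n + 1) -
        C (2 * (2 * n + a + b + 2) * (2 * n + a + b + 3) * (2 * n + a + b + 4)) *
          (X * jacobiHypergeometric a b (n + 1)) -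
        C (2 * (n + 1 + a) * (n + 1 + b) * (2 * n + a + b + 4)) * jacobiHypergeometric a b n := by
  ext (_ | k) <;> simp only [coeff_sub, coeff_C_mul, coeff_X_mul, coeff_X_mul_zero,
    coeff_jacobiHypergeometric, mul_zero, sub_zero]
  · exact jacobiCoeff_recurrence_zero n
  · exact jacobiCoeff_recurrence_succ (mt add_eq_zero_iff_eq_neg.1 (ha k)) n

variable (a b) in
lemma eval_jacobiPoly (n : ℕ) (x : ℝ) :
    (jacobiPoly a b n).eval x = (jacobiHypergeometric a b n).eval ((1 - x) / 2) := by
  simp only [jacobiPoly, eval_comp, eval_mul, eval_C, eval_sub, eval_one, eval_X]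
  congr 1
  ring

lemma jacobiPoly_recurrence (ha : ∀ k : ℕ, a + 1 ≠ -k) (n : ℕ) (x : ℝ) :
    2 * (n + 2) * (n + a + b + 2) * (2 * n + a + b + 2) * (jacobiPoly a b (n + 2)).eval x =
      (2 * n + a + b + 3) * ((2 * n + a + b + 2) * (2 * n + a + b + 4) * x + a ^ 2 - b ^ 2) *
          (jacobiPoly a b (n + 1)).eval x -
        2 * (n + 1 + a) * (n + 1 + b) * (2 * n + a + b + 4) * (jacobiPoly a b n).eval x := by
  have h := congrArg (eval ((1 - x) / 2)) (jacobiHypergeometric_recurrence (b := b) ha n)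
  simp only [eval_sub, eval_mul, eval_C, eval_X, ← eval_jacobiPoly] at h
  linear_combination h

theorem eval_jacobiPoly_eq_jacobiP (ha : ∀ k : ℕ, a + 1 ≠ -k) (hab : -2 < a + b) (n : ℕ)
    (x : ℝ) :
    (jacobiPoly a b n).eval x = jacobiP a b n x := by
  induction n using Nat.twoStepInduction with
  | zero => simp [eval_jacobiPoly, jacobiHypergeometric, jacobiCoeff, jacobiP]
  | one =>
    have h₀ : jacobiCoeff a b 1 0 = a + 1 := by simp [jacobiCoeff_zero_right]
    have h₁ : jacobiCoeff a b 1 1 = -(a + b + 2) := by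
      simpa [jacobiCoeff_zero_right] using
        jacobiCoeff_succ_succ_mul (b := b) (by simpa using ha 0) 0 0
    simp only [eval_jacobiPoly, jacobiHypergeometric, sum_range_succ, sum_range_zero, zero_add,
      eval_add, eval_monomial, h₀, h₁, jacobiP]
    ring
  | more n ih₀ ih₁ =>
    have hn : (0 : ℝ) ≤ n := n.cast_nonneg
    have h₂ : (n + 1 + 1 : ℝ) ≠ 0 := by positivity
    have h₃ : n + 1 + a + b + 1 ≠ 0 := by linarith [hn]
    have h₄ : 2 * (n + 1 : ℝ) + a + b ≠ 0 := by linarith [hn]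
    have h := jacobiPoly_recurrence (b := b) ha n x
    rw [ih₀, ih₁] at h
    rw [jacobiP]
    field_simp
    linear_combination h

variable (a b) in
lemma natDegree_jacobiPoly_le (n : ℕ) : (jacobiPoly a b n).natDegree ≤ n := by
  have hlin : (C (1 / 2) * (1 - X) : ℝ[X]).natDegree ≤ 1 := by compute_degree
  have hhyp : (jacobiHypergeometric a b n).natDegree ≤ n :=
    natDegree_le_iff_coeff_eq_zero.2 fun k hk => by
      rw [coeff_jacobiHypergeometric, jacobiCoeff_eq_zero_of_lt a b hk]
  exact natDegree_comp_le.trans ((Nat.mul_le_mul hhyp hlin).trans_eq n.mul_one)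

lemma derivative_jacobiPoly_succ (ha : a + 1 ≠ 0) (n : ℕ) :
    derivative (jacobiPoly a b (n + 1)) =
      C ((n + a + b + 2) / 2) * jacobiPoly (a + 1) (b + 1) n := by
  have h : derivative (jacobiHypergeometric a b (n + 1)) =
      C (-(n + a + b + 2)) * jacobiHypergeometric (a + 1) (b + 1) n := by
    ext k
    rw [coeff_derivative, coeff_C_mul, coeff_jacobiHypergeometric, coeff_jacobiHypergeometric,
      jacobiCoeff_succ_succ_mul ha]
  have hlin : derivative (C (1 / 2) * (1 - X) : ℝ[X]) = C (-(1 / 2)) := by simp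
  rw [jacobiPoly, derivative_comp, h, hlin, mul_comp, C_comp, ← mul_assoc, ← C_mul, jacobiPoly]
  ring_nf

lemma eval_derivative_jacobiPoly (ha : ∀ k : ℕ, a + 1 ≠ -k) (hab : -4 < a + b) {n : ℕ}
    (hn : 1 ≤ n) (x : ℝ) :
    (derivative (jacobiPoly a b n)).eval x =
      (n + a + b + 1) / 2 * jacobiP (a + 1) (b + 1) (n - 1) x := by
  obtain ⟨m, rfl⟩ := Nat.exists_eq_add_of_le' hn
  have ha' : ∀ k : ℕ, a + 1 + 1 ≠ -k := fun k h => ha (k + 1) (by push_cast; linarith)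
  rw [derivative_jacobiPoly_succ (by simpa using ha 0), eval_mul, eval_C,
    eval_jacobiPoly_eq_jacobiP ha' (by linarith), Nat.add_sub_cancel]
  push_cast
  ring

lemma eval_one_jacobiPoly (ha : ∀ k : ℕ, a + 1 ≠ -k) (b : ℝ) (n : ℕ) :
    (jacobiPoly a b n).eval 1 = Real.Gamma (a + 1 + n) / (n.factorial * Real.Gamma (a + 1)) := by
  rw [eval_jacobiPoly, sub_self, zero_div, ← coeff_zero_eq_eval_zero, coeff_jacobiHypergeometric,
    jacobiCoeff_zero_right, Gamma_add_natCast_eq_ascPochhammer_mul ha,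
    mul_div_mul_right _ _ (Real.Gamma_ne_zero ha)]

end JacobiPolynomial

theorem eq_C_eval_mul_lagrangeBasis {F ι : Type*} [Field F] [DecidableEq ι] {s : Finset ι}
    {v : ι → F} (hv : Set.InjOn v s) {j : ι} (hj : j ∈ s) {p : F[X]} (hp : p.degree < #s)
    (hroot : ∀ i ∈ s, i ≠ j → p.eval (v i) = 0) :
    p = C (p.eval (v j)) * Lagrange.basis s v j := by
  conv_lhs => rw [Lagrange.eq_interpolate hv hp, Lagrange.interpolate_apply]
  refine sum_eq_single_of_mem j hj fun i hi hij => ?_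
  rw [hroot i hi hij, C_0, zero_mul]

section GeneralizedLagrange

variable {u : ℝ → ℝ} {n : ℕ} {x : Fin (n + 1) → ℝ} {j : Fin (n + 1)}

lemma deriv_glW (hu : DifferentiableAt ℝ u (x j)) :
    deriv (glW u x) (x j) =
      deriv u (x j) * (derivative (Lagrange.nodal univ (u ∘ x))).eval (u (x j)) := by
  have hW : glW u x = (Lagrange.nodal univ (u ∘ x)).eval ∘ u := by
    funext t
    simp [glW, Lagrange.eval_nodal]
  rw [hW, deriv_comp _ (Polynomial.differentiableAt _) hu, Polynomial.deriv, mul_comm]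

theorem glL_eq_eval_lagrangeBasis (hu' : deriv u (x j) ≠ 0) :
    glL u x j = fun t => (Lagrange.basis univ (u ∘ x) j).eval (u t) := by
  funext t
  rw [glL, deriv_glW (differentiableAt_of_deriv_ne_zero hu'), div_mul_cancel_left₀ hu',
    Lagrange.basis_eq_prod_sub_inv_mul_nodal_div (mem_univ j),
    ← Lagrange.nodal_erase_eq_nodal_div (mem_univ j), eval_mul, eval_C,
    Lagrange.nodalWeight_eq_eval_derivative_nodal (mem_univ j), Lagrange.eval_nodal]
  rfl

lemma deriv_glL (hu' : deriv u (x j) ≠ 0) {t : ℝ} (ht : DifferentiableAt ℝ u t) :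
    deriv (glL u x j) t =
      deriv u t * (derivative (Lagrange.basis univ (u ∘ x) j)).eval (u t) := by
  rw [glL_eq_eval_lagrangeBasis hu', mul_comm]
  exact (((Lagrange.basis univ (u ∘ x) j).hasDerivAt (u t)).comp t ht.hasDerivAt).deriv

end GeneralizedLagrange

theorem gl_jacobi_radau_last_column_general {α β : ℝ} (hα : ∀ k : ℕ, α + 1 ≠ -k)
    (hαβ : -3 < α + β) {n : ℕ} (hn : 1 ≤ n) {u : ℝ → ℝ} {x : Fin (n + 1) → ℝ}
    (hux : Function.Injective (u ∘ x)) (hu' : deriv u (x (Fin.last n)) ≠ 0)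
    (hroots : ∀ i : Fin (n + 1), (i : ℕ) < n → jacobiP α (β + 1) n (u (x i)) = 0)
    (hlast : u (x (Fin.last n)) = 1) {t : ℝ} (ht : DifferentiableAt ℝ u t) :
    deriv (glL u x (Fin.last n)) t =
      deriv u t * jacobiP (α + 1) (β + 2) (n - 1) (u t) * (n.factorial : ℝ) *
        (α + β + (n : ℝ) + 2) * Real.Gamma (α + 1) / (2 * Real.Gamma (α + 1 + (n : ℝ))) := by
  set G := jacobiPoly α (β + 1) n with hG
  have hbasis : G = C (G.eval 1) * Lagrange.basis univ (u ∘ x) (Fin.last n) := by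
    have hdeg : G.degree < #(univ : Finset (Fin (n + 1))) := by
      rw [card_fin]
      exact (degree_le_of_natDegree_le (natDegree_jacobiPoly_le _ _ _)).trans_lt
        (mod_cast n.lt_succ_self)
    have hzero : ∀ i ∈ univ, i ≠ Fin.last n → G.eval ((u ∘ x) i) = 0 := fun i _ hi => by
      rw [hG, eval_jacobiPoly_eq_jacobiP hα (by linarith)]
      exact hroots i (Fin.val_lt_last hi)
    simpa only [Function.comp_apply, hlast] using
      eq_C_eval_mul_lagrangeBasis hux.injOn (mem_univ _) hdeg hzero
  have hG' : (derivative G).eval (u t) =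
      (n + α + (β + 1) + 1) / 2 * jacobiP (α + 1) (β + 1 + 1) (n - 1) (u t) :=
    eval_derivative_jacobiPoly hα (by linarith) hn (u t)
  have hΓ : Real.Gamma (α + 1) ≠ 0 := Real.Gamma_ne_zero hα
  have hΓn : Real.Gamma (α + 1 + n) ≠ 0 := Gamma_add_natCast_ne_zero hα n
  rw [hbasis, derivative_C_mul, eval_mul, eval_C, eval_one_jacobiPoly hα,
    show β + 1 + 1 = β + 2 by ring] at hG'
  rw [deriv_glL hu' ht]
  field_simp at hG' ⊢
  linear_combination deriv u t * hG'

theorem gl_jacobi_radau_last_column (α β : ℝ) (hα : -1 < α) (hβ : -1 < β)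
    (n : ℕ) (hn : 1 ≤ n) (u : ℝ → ℝ) (x : Fin (n + 1) → ℝ)
    (hu : Differentiable ℝ u)
    (hx : Function.Injective x)
    (hux : Function.Injective (u ∘ x))
    (hu' : ∀ i, deriv u (x i) ≠ 0)
    (hroots : ∀ i : Fin (n + 1), (i : ℕ) < n → jacobiP α (β + 1) n (u (x i)) = 0)
    (hlast : u (x (Fin.last n)) = 1)
    (k : Fin (n + 1)) (hk : (k : ℕ) < n) :
    deriv (glL u x (Fin.last n)) (x k) =
      deriv u (x k) * jacobiP (α + 1) (β + 2) (n - 1) (u (x k)) * (n.factorial : ℝ) *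
        (α + β + (n : ℝ) + 2) * Real.Gamma (α + 1) / (2 * Real.Gamma (α + 1 + (n : ℝ))) := by
  have hα' : ∀ k : ℕ, α + 1 ≠ -k := fun k => by have := k.cast_nonneg (α := ℝ); linarith
  exact gl_jacobi_radau_last_column_general hα' (by linarith) hn hux (hu' _) hroots hlast (hu _)
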